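/- There exists a constant C > 0, depending only on n, κ1 and C₀, such that for every x = (x', x_n) ∈ Ω₁ the Laplacian of ũ satisfies |Δũ(x)| ≤ C·|φ(x') − ψ(x')|/(ε + |x'|²) + C·(|x'|/(ε + |x'|²) + 1)·(‖∇φ‖_∞ + ‖∇ψ‖_∞) + C·(‖∇²φ‖_∞ + ‖∇²ψ‖_∞). -/

import Mathlib

/-!
Write `ũ = ψ + (φ - ψ)ū` and `δ = ε + h₁ - h₂`, so that
`∂_i²ũ = ∂_i²ψ + ū ∂_i²(φ - ψ) + 2 ∂_i(φ - ψ) ∂_iū + (φ - ψ) ∂_i²ū`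
(`dirDeriv2_util`), with `0 < ū < 1` in `Ω₁`; the vertical second derivative vanishes
because `ũ` is affine in `x_n` (`dirDeriv2_util_vert`).

Everything thus reduces to `|∂_iū| ≲ |x'|/(ε + |x'|²)` and `|∂_i²ū| ≲ 1/(ε + |x'|²)`.  Instead of
using a quotient rule, the identity `ūδ = x_n - h₂ + ε/2` is differentiated once and twice
(`ubar_derivs`) and solved for the derivatives of `ū` (`abs_ubar_derivs_le`).  The inputs are
`δ ≥ (ε + |x'|²)/C₀`, the bound `|∇²h_j| ≤ κ₁` and, since `∇h_j(0') = 0`, the bound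
`|∇h_j(x')| ≤ κ₁|x'|` (`norm_fderiv_le_mul_norm`).

The suprema in the norms are real suprema, hence junk-valued when unbounded, and use ambient
derivatives also on the unit sphere; `exists_bound_derivs` shows that they are bounded.
-/

open MeasureTheory Metric Finset

noncomputable section

/-- `ℝ^{n-1}`, the horizontal (tangential) variables `x'`. -/
abbrev Ep (n : ℕ) := EuclideanSpace ℝ (Fin (n - 1))

/-- `ℝ^n = ℝ^{n-1} × ℝ`, points written `x = (x', x_n)`. -/
abbrev Efull (n : ℕ) := Ep n × ℝ

/-- The narrow region `Ω_r`. -/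
def Omega (n : ℕ) (ε : ℝ) (h1 h2 : Ep n → ℝ) (r : ℝ) : Set (Efull n) :=
  {x | ‖x.1‖ < r ∧ -ε/2 + h2 x.1 < x.2 ∧ x.2 < ε/2 + h1 x.1}

/-- Top boundary `Γ_r⁺`. -/
def Gammap (n : ℕ) (ε : ℝ) (h1 : Ep n → ℝ) (r : ℝ) : Set (Efull n) :=
  {x | ‖x.1‖ ≤ r ∧ x.2 = ε/2 + h1 x.1}

/-- Bottom boundary `Γ_r⁻`. -/
def Gammam (n : ℕ) (ε : ℝ) (h2 : Ep n → ℝ) (r : ℝ) : Set (Efull n) :=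
  {x | ‖x.1‖ ≤ r ∧ x.2 = -ε/2 + h2 x.1}

/-- `Ω̂_s(x₀) = {x ∈ Ω_{1/2} : |x' - x₀'| < s}`. -/
def OmegaHat (n : ℕ) (ε : ℝ) (h1 h2 : Ep n → ℝ) (x0 : Efull n) (s : ℝ) : Set (Efull n) :=
  {x | x ∈ Omega n ε h1 h2 (1/2) ∧ ‖x.1 - x0.1‖ < s}

/-- The `n` coordinate directions of `ℝ^{n-1} × ℝ`: the first `n-1` are the horizontal
Euclidean basis vectors, the last is the vertical direction. -/
def dir (n : ℕ) (α : Fin n) : Efull n :=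
  if h : (α : ℕ) < n - 1 then (EuclideanSpace.single (⟨(α : ℕ), h⟩ : Fin (n - 1)) 1, (0:ℝ))
  else (0, 1)

/-- Tangential direction `e_α` for `α ∈ {1, …, n-1}`. -/
def tang (n : ℕ) (α : Fin (n - 1)) : Efull n := (EuclideanSpace.single α 1, (0:ℝ))

/-- Vertical direction `e_n`. -/
def vert (n : ℕ) : Efull n := (0, 1)

/-- Pointwise Laplacian `Δu = Σ_α ∂_α∂_α u`. -/
def lapl (n : ℕ) (u : Efull n → ℝ) (x : Efull n) : ℝ :=
  ∑ α : Fin n, fderiv ℝ (fun y => fderiv ℝ u y (dir n α)) x (dir n α)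

/-- The auxiliary function `ū(x', x_n) = (x_n - h2(x') + ε/2)/(ε + h1(x') - h2(x'))`. -/
def ubar (n : ℕ) (ε : ℝ) (h1 h2 : Ep n → ℝ) (x : Efull n) : ℝ :=
  (x.2 - h2 x.1 + ε/2) / (ε + h1 x.1 - h2 x.1)

/-- The auxiliary function `ũ = φ(x')·ū + ψ(x')·(1 - ū)`. -/
def util (n : ℕ) (ε : ℝ) (h1 h2 φ ψ : Ep n → ℝ) (x : Efull n) : ℝ :=
  φ x.1 * ubar n ε h1 h2 x + ψ x.1 * (1 - ubar n ε h1 h2 x)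

/-- `C²`-norm on the closed unit ball: `sup_{|x'| ≤ 1} (|f| + |∇f| + |∇²f|)`. -/
def C2norm {F : Type*} [NormedAddCommGroup F] [NormedSpace ℝ F] (n : ℕ)
    (f : Ep n → F) : ℝ :=
  ⨆ y : closedBall (0 : Ep n) 1,
    (‖f (y : Ep n)‖ + ‖fderiv ℝ f (y : Ep n)‖ + ‖fderiv ℝ (fderiv ℝ f) (y : Ep n)‖)

/-- `C²(S)`-norm of a function on `ℝ^n`. -/
def C2normOn (n : ℕ) (S : Set (Efull n)) (f : Efull n → ℝ) : ℝ :=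
  ⨆ y : S,
    (‖f (y : Efull n)‖ + ‖fderiv ℝ f (y : Efull n)‖ + ‖fderiv ℝ (fderiv ℝ f) (y : Efull n)‖)

/-- `‖∇f‖_∞ = sup_{|x'| ≤ 1} |∇f(x')|`. -/
def gradSup {F : Type*} [NormedAddCommGroup F] [NormedSpace ℝ F] (n : ℕ) (f : Ep n → F) : ℝ :=
  ⨆ y : closedBall (0 : Ep n) 1, ‖fderiv ℝ f (y : Ep n)‖

/-- `‖∇²f‖_∞ = sup_{|x'| ≤ 1} |∇²f(x')|`. -/
def hessSup {F : Type*} [NormedAddCommGroup F] [NormedSpace ℝ F] (n : ℕ) (f : Ep n → F) : ℝ :=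
  ⨆ y : closedBall (0 : Ep n) 1, ‖fderiv ℝ (fderiv ℝ f) (y : Ep n)‖

/-- The geometric hypotheses on `h1, h2`: `C²` on the closed unit ball, the two graphs
do not touch, flatness at the origin, strict convexity of the gap, and `C²`-bound `κ1`. -/
def HGeom (n : ℕ) (ε κ0 κ1 : ℝ) (h1 h2 : Ep n → ℝ) : Prop :=
  ContDiffOn ℝ 2 h1 (closedBall 0 1) ∧ ContDiffOn ℝ 2 h2 (closedBall 0 1) ∧
  (∀ y : Ep n, ‖y‖ ≤ 1 → -ε/2 + h2 y < ε/2 + h1 y) ∧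
  h1 0 = 0 ∧ h2 0 = 0 ∧ fderiv ℝ h1 0 = 0 ∧ fderiv ℝ h2 0 = 0 ∧
  (∀ v : Ep n, κ0 * ‖v‖^2 ≤ fderiv ℝ (fderiv ℝ (fun y => h1 y - h2 y)) 0 v v) ∧
  C2norm n h1 + C2norm n h2 ≤ κ1

/-- Comparability `(ε + |x'|²)/C₀ ≤ δ(x') ≤ C₀ (ε + |x'|²)`. -/
def DeltaComp (n : ℕ) (ε C₀ : ℝ) (h1 h2 : Ep n → ℝ) : Prop :=
  ∀ y : Ep n, ‖y‖ ≤ 1 →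
    (ε + ‖y‖^2) / C₀ ≤ ε + h1 y - h2 y ∧ ε + h1 y - h2 y ≤ C₀ * (ε + ‖y‖^2)

/-- Hypotheses on the coefficients: `C²`-regularity with total `C²(Ω₁)`-norm at most `κ2`,
boundedness `|A| ≤ Λ`, and the weak ellipticity (Legendre) condition with constant `λ`. -/
def CoeffHyp (n N : ℕ) (ε lam Lam κ2 : ℝ) (h1 h2 : Ep n → ℝ)
    (A : Fin n → Fin n → Fin N → Fin N → Efull n → ℝ)
    (B : Fin n → Fin N → Fin N → Efull n → ℝ)
    (Cc : Fin n → Fin N → Fin N → Efull n → ℝ)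
    (Dc : Fin N → Fin N → Efull n → ℝ) : Prop :=
  (∀ α β i j, ContDiffOn ℝ 2 (A α β i j) (Omega n ε h1 h2 1)) ∧
  (∀ α i j, ContDiffOn ℝ 2 (B α i j) (Omega n ε h1 h2 1)) ∧
  (∀ β i j, ContDiffOn ℝ 2 (Cc β i j) (Omega n ε h1 h2 1)) ∧
  (∀ i j, ContDiffOn ℝ 2 (Dc i j) (Omega n ε h1 h2 1)) ∧
  ((∑ α : Fin n, ∑ β : Fin n, ∑ i : Fin N, ∑ j : Fin N,
      C2normOn n (Omega n ε h1 h2 1) (A α β i j)) +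
   (∑ α : Fin n, ∑ i : Fin N, ∑ j : Fin N, C2normOn n (Omega n ε h1 h2 1) (B α i j)) +
   (∑ β : Fin n, ∑ i : Fin N, ∑ j : Fin N, C2normOn n (Omega n ε h1 h2 1) (Cc β i j)) +
   (∑ i : Fin N, ∑ j : Fin N, C2normOn n (Omega n ε h1 h2 1) (Dc i j)) ≤ κ2) ∧
  (∀ α β i j, ∀ x ∈ Omega n ε h1 h2 1, |A α β i j x| ≤ Lam) ∧
  (∀ ξ : Efull n → EuclideanSpace ℝ (Fin N), ContDiff ℝ (⊤ : ℕ∞) ξ →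
    HasCompactSupport ξ → tsupport ξ ⊆ Omega n ε h1 h2 1 →
    lam * ∫ x in Omega n ε h1 h2 1, ‖fderiv ℝ ξ x‖^2 ≤
      ∫ x in Omega n ε h1 h2 1,
        ∑ α : Fin n, ∑ β : Fin n, ∑ i : Fin N, ∑ j : Fin N,
          A α β i j x * fderiv ℝ ξ x (dir n α) i * fderiv ℝ ξ x (dir n β) j)

/-- `u` is a weak solution of
`∂_α(A^{αβ}_{ij} ∂_β u^j + B^α_{ij} u^j) + C^β_{ij} ∂_β u^j + D_{ij} u^j = 0` in `Ω₁`. -/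
def WeakSol (n N : ℕ) (ε : ℝ) (h1 h2 : Ep n → ℝ)
    (A : Fin n → Fin n → Fin N → Fin N → Efull n → ℝ)
    (B : Fin n → Fin N → Fin N → Efull n → ℝ)
    (Cc : Fin n → Fin N → Fin N → Efull n → ℝ)
    (Dc : Fin N → Fin N → Efull n → ℝ)
    (u : Efull n → EuclideanSpace ℝ (Fin N)) : Prop :=
  ContDiffOn ℝ 1 u (Omega n ε h1 h2 1) ∧
  IntegrableOn (fun x => ‖u x‖^2 + ‖fderiv ℝ u x‖^2) (Omega n ε h1 h2 1) ∧
  ∀ ζ : Efull n → EuclideanSpace ℝ (Fin N), ContDiff ℝ (⊤ : ℕ∞) ζ →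
    HasCompactSupport ζ → tsupport ζ ⊆ Omega n ε h1 h2 1 →
    (∫ x in Omega n ε h1 h2 1,
      ((∑ α : Fin n, ∑ i : Fin N,
          ((∑ β : Fin n, ∑ j : Fin N, A α β i j x * fderiv ℝ u x (dir n β) j) +
            ∑ j : Fin N, B α i j x * u x j) * fderiv ℝ ζ x (dir n α) i) -
        ∑ i : Fin N,
          ((∑ β : Fin n, ∑ j : Fin N, Cc β i j x * fderiv ℝ u x (dir n β) j) +
            ∑ j : Fin N, Dc i j x * u x j) * ζ x i)) = 0

/-- `u` attains the boundary values `(φ, ψ)` on `Γ₁⁺` and `Γ₁⁻`. -/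
def AttainsBV {F : Type*} [NormedAddCommGroup F] [NormedSpace ℝ F] (n : ℕ) (ε : ℝ)
    (h1 h2 : Ep n → ℝ) (u : Efull n → F) (φ ψ : Ep n → F) : Prop :=
  ContinuousOn u (Omega n ε h1 h2 1 ∪ Gammap n ε h1 1 ∪ Gammam n ε h2 1) ∧
  (∀ y : Ep n, ‖y‖ ≤ 1 → u (y, ε/2 + h1 y) = φ y ∧ u (y, -ε/2 + h2 y) = ψ y)

/-- `u` is a harmonic function on `Ω₁` with boundary values `φ` on `Γ₁⁺` and `ψ` on `Γ₁⁻`. -/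
def HarmBV (n : ℕ) (ε : ℝ) (h1 h2 : Ep n → ℝ) (u : Efull n → ℝ) (φ ψ : Ep n → ℝ) : Prop :=
  ContDiffOn ℝ 2 u (Omega n ε h1 h2 1) ∧
  (∀ x ∈ Omega n ε h1 h2 1, lapl n u x = 0) ∧
  IntegrableOn (fun x => ‖u x‖^2 + ‖fderiv ℝ u x‖^2) (Omega n ε h1 h2 1) ∧
  AttainsBV n ε h1 h2 u φ ψ

/-! ### Finiteness of the suprema -/

/-- For `f` of class `C²` on the closed unit ball, `f` and its ambient first and second derivatives
are bounded there.  At a boundary point an ambient derivative is either the junk value `0` or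
agrees with the derivative within the ball, because the ball is a set of unique differentiability;
hence the suprema defining the norms are genuine. -/
lemma exists_bound_derivs {n : ℕ} {f : Ep n → ℝ} (hf : ContDiffOn ℝ 2 f (closedBall 0 1)) :
    ∃ M : ℝ, ∀ y ∈ closedBall (0 : Ep n) 1,
      ‖f y‖ ≤ M ∧ ‖fderiv ℝ f y‖ ≤ M ∧ ‖fderiv ℝ (fderiv ℝ f) y‖ ≤ M := by
  set s := closedBall (0 : Ep n) 1 with hs
  have hball : (interior (ball (0 : Ep n) 1)).Nonempty := by
    rw [isOpen_ball.interior_eq]; exact ⟨0, by simp⟩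
  have hsub : ball (0 : Ep n) 1 ⊆ s := ball_subset_closedBall
  have hcl : closure (ball (0 : Ep n) 1) = s := closure_ball _ one_ne_zero
  have hud : UniqueDiffOn ℝ s :=
    uniqueDiffOn_convex (convex_closedBall _ _) (hball.mono (interior_mono hsub))
  have hG : ContDiffOn ℝ 1 (fderivWithin ℝ f s) s := hf.fderivWithin hud (by norm_num)
  have hH : ContinuousOn (fderivWithin ℝ (fderivWithin ℝ f s) s) s :=
    hG.continuousOn_fderivWithin hud le_rfl
  have hcomp : IsCompact s := isCompact_closedBall _ _
  obtain ⟨M0, h0⟩ := hcomp.exists_bound_of_continuousOn hf.continuousOn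
  obtain ⟨M1, h1⟩ := hcomp.exists_bound_of_continuousOn hG.continuousOn
  obtain ⟨M2, h2⟩ : ∃ M, ∀ y ∈ s, ‖fderivWithin ℝ (fderivWithin ℝ f s) s y‖ ≤ M :=
    hcomp.exists_bound_of_continuousOn (E := Ep n →L[ℝ] Ep n →L[ℝ] ℝ) hH
  refine ⟨max M0 (max M1 M2), fun y hy => ⟨(h0 y hy).trans (le_max_left _ _), ?_, ?_⟩⟩
  · refine le_trans ?_ ((le_max_left M1 M2).trans (le_max_right M0 _))
    by_cases hd : DifferentiableAt ℝ f y
    · rw [← hd.fderivWithin (hud y hy)]; exact h1 y hy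
    · rw [fderiv_zero_of_not_differentiableAt hd, norm_zero]
      exact (norm_nonneg _).trans (h1 y hy)
  · refine le_trans ?_ ((le_max_right M1 M2).trans (le_max_right M0 _))
    by_cases hd : DifferentiableAt ℝ (fderiv ℝ f) y
    · have hyc : y ∈ closure (ball (0 : Ep n) 1) := by rw [hcl]; exact hy
      have heq : ∀ z ∈ ball (0 : Ep n) 1, fderiv ℝ f z = fderivWithin ℝ f s z := fun z hz =>
        (fderivWithin_of_mem_nhds (Filter.mem_of_superset (isOpen_ball.mem_nhds hz) hsub)).symm
      have hG1 : HasFDerivWithinAt (fderivWithin ℝ f s)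
          (fderivWithin ℝ (fderivWithin ℝ f s) s y) (ball 0 1) y :=
        ((hG.differentiableOn one_ne_zero y hy).hasFDerivWithinAt).mono hsub
      have hG2 : HasFDerivWithinAt (fderiv ℝ f) (fderiv ℝ (fderiv ℝ f) y) (ball 0 1) y :=
        hd.hasFDerivAt.hasFDerivWithinAt
      have : (nhdsWithin y (ball (0 : Ep n) 1)).NeBot := mem_closure_iff_nhdsWithin_neBot.1 hyc
      have hy' : fderiv ℝ f y = fderivWithin ℝ f s y := by
        have t1 := hG1.continuousWithinAt.tendsto
        have t2 := hG2.continuousWithinAt.tendsto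
        refine tendsto_nhds_unique (t2.congr' ?_) t1
        filter_upwards [self_mem_nhdsWithin] with z hz using heq z hz
      have hG3 := hG1.congr heq hy'
      have hu : UniqueDiffWithinAt ℝ (ball (0 : Ep n) 1) y :=
        uniqueDiffWithinAt_convex (convex_ball _ _) hball hyc
      rw [hu.eq hG2 hG3]
      exact h2 y hy
    · have hz : ‖fderiv ℝ (fderiv ℝ f) y‖ = 0 := by
        rw [fderiv_zero_of_not_differentiableAt hd]; exact ContinuousLinearMap.opNorm_zero
      rw [hz]
      exact le_trans (by positivity) (h2 y hy)

lemma norm_fderiv_le_gradSup {n : ℕ} {f : Ep n → ℝ} (hf : ContDiffOn ℝ 2 f (closedBall 0 1))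
    {y : Ep n} (hy : y ∈ closedBall (0 : Ep n) 1) : ‖fderiv ℝ f y‖ ≤ gradSup n f := by
  obtain ⟨M, hM⟩ := exists_bound_derivs hf
  exact le_ciSup (f := fun y : closedBall (0 : Ep n) 1 => ‖fderiv ℝ f (y : Ep n)‖)
    ⟨M, by rintro _ ⟨z, rfl⟩; exact (hM z z.2).2.1⟩ ⟨y, hy⟩

lemma norm_hess_le_hessSup {n : ℕ} {f : Ep n → ℝ} (hf : ContDiffOn ℝ 2 f (closedBall 0 1))
    {y : Ep n} (hy : y ∈ closedBall (0 : Ep n) 1) :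
    ‖fderiv ℝ (fderiv ℝ f) y‖ ≤ hessSup n f := by
  obtain ⟨M, hM⟩ := exists_bound_derivs hf
  exact le_ciSup (f := fun y : closedBall (0 : Ep n) 1 => ‖fderiv ℝ (fderiv ℝ f) (y : Ep n)‖)
    ⟨M, by rintro _ ⟨z, rfl⟩; exact (hM z z.2).2.2⟩ ⟨y, hy⟩

lemma norm_hess_le_C2norm {n : ℕ} {f : Ep n → ℝ} (hf : ContDiffOn ℝ 2 f (closedBall 0 1))
    {y : Ep n} (hy : y ∈ closedBall (0 : Ep n) 1) :
    ‖fderiv ℝ (fderiv ℝ f) y‖ ≤ C2norm n f := by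
  obtain ⟨M, hM⟩ := exists_bound_derivs hf
  have h := le_ciSup (f := fun y : closedBall (0 : Ep n) 1 =>
    ‖f (y : Ep n)‖ + ‖fderiv ℝ f (y : Ep n)‖ + ‖fderiv ℝ (fderiv ℝ f) (y : Ep n)‖)
    ⟨M + M + M, by
      rintro _ ⟨z, rfl⟩
      exact add_le_add (add_le_add (hM z z.2).1 (hM z z.2).2.1) (hM z z.2).2.2⟩ ⟨y, hy⟩
  refine le_trans ?_ h
  have := norm_nonneg (f y)
  have := norm_nonneg (fderiv ℝ f y)
  simp only
  linarith

lemma C2norm_nonneg {n : ℕ} (f : Ep n → ℝ) : 0 ≤ C2norm n f :=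
  Real.iSup_nonneg fun _ => by positivity

lemma gradSup_nonneg {n : ℕ} (f : Ep n → ℝ) : 0 ≤ gradSup n f :=
  Real.iSup_nonneg fun _ => norm_nonneg _

lemma hessSup_nonneg {n : ℕ} (f : Ep n → ℝ) : 0 ≤ hessSup n f :=
  Real.iSup_nonneg fun _ => by positivity

lemma contDiffAt_of_ball {n : ℕ} {f : Ep n → ℝ} (hf : ContDiffOn ℝ 2 f (closedBall 0 1))
    {y : Ep n} (hy : ‖y‖ < 1) : ContDiffAt ℝ 2 f y :=
  hf.contDiffAt (Filter.mem_of_superset (isOpen_ball.mem_nhds (by simpa using hy))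
    ball_subset_closedBall)

/-- A function whose gradient vanishes at the origin satisfies `|∇f(y)| ≤ ‖f‖_{C²} |y|`, by the
mean value inequality for `∇f`. -/
lemma norm_fderiv_le_mul_norm {n : ℕ} {f : Ep n → ℝ} {K : ℝ}
    (hf : ContDiffOn ℝ 2 f (closedBall 0 1)) (hf0 : fderiv ℝ f 0 = 0) (hK : C2norm n f ≤ K)
    {y : Ep n} (hy : ‖y‖ < 1) : ‖fderiv ℝ f y‖ ≤ K * ‖y‖ := by
  have h := (convex_ball (0 : Ep n) 1).norm_image_sub_le_of_norm_fderiv_le (𝕜 := ℝ)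
    (f := fderiv ℝ f) (C := K) (x := 0) (y := y)
    (fun z hz => ((contDiffAt_of_ball hf (by simpa using hz)).fderiv_right
      (m := 1) (by norm_num)).differentiableAt one_ne_zero)
    (fun z hz => (norm_hess_le_C2norm hf (ball_subset_closedBall hz)).trans hK)
    (by simp) (by simpa using hy)
  simpa [hf0] using h

/-! ### Pure second directional derivatives -/

/-- The pure second derivative `∂_v∂_v u` at `x`, in the form in which it occurs in `lapl`. -/
def dirDeriv2 {E : Type*} [NormedAddCommGroup E] [NormedSpace ℝ E] (u : E → ℝ) (x v : E) : ℝ :=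
  fderiv ℝ (fun y => fderiv ℝ u y v) x v

section Calculus

variable {E : Type*} [NormedAddCommGroup E] [NormedSpace ℝ E] {f g : E → ℝ} {x : E}

lemma differentiableAt_fderiv_apply (hf : ContDiffAt ℝ 2 f x) (v : E) :
    DifferentiableAt ℝ (fun y => fderiv ℝ f y v) x :=
  ((hf.fderiv_right (m := 1) (by norm_num)).differentiableAt one_ne_zero).clm_apply
    (differentiableAt_const v)

lemma eventually_differentiableAt (hf : ContDiffAt ℝ 2 f x) :
    ∀ᶠ y in nhds x, DifferentiableAt ℝ f y := by
  filter_upwards [hf.eventually (by simp)] with y hy using hy.differentiableAt two_ne_zero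

lemma dirDeriv2_congr (h : f =ᶠ[nhds x] g) (v : E) : dirDeriv2 f x v = dirDeriv2 g x v := by
  unfold dirDeriv2
  rw [Filter.EventuallyEq.fderiv_eq]
  filter_upwards [h.eventuallyEq_nhds] with y hy
  rw [hy.fderiv_eq]

lemma dirDeriv2_eq_hess (hf : ContDiffAt ℝ 2 f x) (v : E) :
    dirDeriv2 f x v = fderiv ℝ (fderiv ℝ f) x v v := by
  unfold dirDeriv2
  rw [fderiv_clm_apply ((hf.fderiv_right (m := 1) (by norm_num)).differentiableAt one_ne_zero)
    (differentiableAt_const v)]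
  simp

lemma dirDeriv2_add (hf : ContDiffAt ℝ 2 f x) (hg : ContDiffAt ℝ 2 g x) (v : E) :
    dirDeriv2 (fun y => f y + g y) x v = dirDeriv2 f x v + dirDeriv2 g x v := by
  have h : (fun y => fderiv ℝ (fun y => f y + g y) y v) =ᶠ[nhds x]
      fun y => fderiv ℝ f y v + fderiv ℝ g y v := by
    filter_upwards [eventually_differentiableAt hf, eventually_differentiableAt hg] with y h1 h2
    rw [fderiv_fun_add h1 h2]; rfl
  unfold dirDeriv2
  rw [h.fderiv_eq, fderiv_fun_add (differentiableAt_fderiv_apply hf v)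
    (differentiableAt_fderiv_apply hg v)]
  rfl

lemma dirDeriv2_sub (hf : ContDiffAt ℝ 2 f x) (hg : ContDiffAt ℝ 2 g x) (v : E) :
    dirDeriv2 (fun y => f y - g y) x v = dirDeriv2 f x v - dirDeriv2 g x v := by
  have h : (fun y => fderiv ℝ (fun y => f y - g y) y v) =ᶠ[nhds x]
      fun y => fderiv ℝ f y v - fderiv ℝ g y v := by
    filter_upwards [eventually_differentiableAt hf, eventually_differentiableAt hg] with y h1 h2
    rw [fderiv_fun_sub h1 h2]; rfl
  unfold dirDeriv2
  rw [h.fderiv_eq, fderiv_fun_sub (differentiableAt_fderiv_apply hf v)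
    (differentiableAt_fderiv_apply hg v)]
  rfl

lemma dirDeriv2_mul (hf : ContDiffAt ℝ 2 f x) (hg : ContDiffAt ℝ 2 g x) (v : E) :
    dirDeriv2 (fun y => f y * g y) x v =
      f x * dirDeriv2 g x v + 2 * fderiv ℝ f x v * fderiv ℝ g x v + g x * dirDeriv2 f x v := by
  have hf1 := hf.differentiableAt two_ne_zero
  have hg1 := hg.differentiableAt two_ne_zero
  have hf2 := differentiableAt_fderiv_apply hf v
  have hg2 := differentiableAt_fderiv_apply hg v
  have h : (fun y => fderiv ℝ (fun y => f y * g y) y v) =ᶠ[nhds x]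
      fun y => f y * fderiv ℝ g y v + g y * fderiv ℝ f y v := by
    filter_upwards [eventually_differentiableAt hf, eventually_differentiableAt hg] with y h1 h2
    rw [fderiv_fun_mul h1 h2]; rfl
  unfold dirDeriv2
  rw [h.fderiv_eq, fderiv_fun_add (hf1.fun_mul hg2) (hg1.fun_mul hf2), fderiv_fun_mul hf1 hg2,
    fderiv_fun_mul hg1 hf2]
  simp only [add_apply, smul_apply, smul_eq_mul]
  ring

lemma dirDeriv2_const (c : ℝ) (v : E) : dirDeriv2 (fun _ => c) x v = 0 := by
  simp [dirDeriv2]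

end Calculus

lemma contDiffAt_comp_fst {n : ℕ} {f : Ep n → ℝ} {x : Efull n} (hf : ContDiffAt ℝ 2 f x.1) :
    ContDiffAt ℝ 2 (fun y : Efull n => f y.1) x :=
  hf.comp x contDiffAt_fst

lemma fderiv_comp_fst_apply {n : ℕ} {f : Ep n → ℝ} {x : Efull n}
    (hf : DifferentiableAt ℝ f x.1) (v : Efull n) :
    fderiv ℝ (fun y : Efull n => f y.1) x v = fderiv ℝ f x.1 v.1 := by
  have h : HasFDerivAt (fun y : Efull n => f y.1)
      ((fderiv ℝ f x.1).comp (ContinuousLinearMap.fst ℝ (Ep n) ℝ)) x :=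
    hf.hasFDerivAt.comp x hasFDerivAt_fst
  rw [h.fderiv]; rfl

lemma dirDeriv2_comp_fst {n : ℕ} {f : Ep n → ℝ} {x : Efull n} (hf : ContDiffAt ℝ 2 f x.1)
    (v : Efull n) :
    dirDeriv2 (fun y : Efull n => f y.1) x v = dirDeriv2 f x.1 v.1 := by
  have h : (fun y => fderiv ℝ (fun y : Efull n => f y.1) y v) =ᶠ[nhds x]
      fun y => (fun z => fderiv ℝ f z v.1) y.1 := by
    filter_upwards [continuous_fst.continuousAt.eventually (eventually_differentiableAt hf)]
      with y hy using fderiv_comp_fst_apply hy v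
  unfold dirDeriv2
  rw [h.fderiv_eq, fderiv_comp_fst_apply (differentiableAt_fderiv_apply hf v.1)]

lemma dirDeriv2_snd {n : ℕ} (x v : Efull n) : dirDeriv2 (fun y : Efull n => y.2) x v = 0 := by
  have h : (fun y => fderiv ℝ (fun y : Efull n => y.2) y v) = fun _ => v.2 := by
    funext y; rw [(hasFDerivAt_snd (𝕜 := ℝ) (p := y)).fderiv]; rfl
  unfold dirDeriv2
  rw [h]; simp

/-! ### Estimates for `ū` and `ũ` -/

/-- The estimates for `U₁ = ∂_iū` and `U₂ = ∂_i²ū`, read off from the once and twice differentiated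
identity `ūδ = x_n - h₂ + ε/2`.  Here `a₁, a₂` and `b₁, b₂` are the derivatives of `h₁` and `h₂`,
`u = ū`, `r = |x'|` and `P = ε + |x'|²`. -/
lemma abs_ubar_derivs_le {κ C₀ P r δ u a₁ a₂ b₁ b₂ U₁ U₂ : ℝ} (hκ : 0 < κ) (hC : 0 < C₀)
    (hP : 0 < P) (hr : 0 ≤ r) (hrP : r ^ 2 ≤ P) (hδ : P / C₀ ≤ δ) (hu0 : 0 ≤ u) (hu1 : u ≤ 1)
    (ha₁ : |a₁| ≤ κ * r) (hb₁ : |b₁| ≤ κ * r) (ha₂ : |a₂| ≤ κ) (hb₂ : |b₂| ≤ κ)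
    (h1 : -b₁ = u * (a₁ - b₁) + δ * U₁)
    (h2 : -b₂ = u * (a₂ - b₂) + 2 * U₁ * (a₁ - b₁) + δ * U₂) :
    |U₁| ≤ 3 * κ * C₀ * (r / P) ∧ |U₂| ≤ (3 * κ * C₀ + 12 * κ ^ 2 * C₀ ^ 2) / P := by
  have hδ0 : 0 < δ := (div_pos hP hC).trans_le hδ
  have hPδ : P ≤ C₀ * δ := by rwa [div_le_iff₀' hC] at hδ
  have key : ∀ a b M : ℝ, |a| ≤ M → |b| ≤ M → |-b - u * (a - b)| ≤ 3 * M := by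
    intro a b M ha hb
    have h3 : |u * (a - b)| ≤ 1 * (M + M) := by
      rw [abs_mul, abs_of_nonneg hu0]
      exact mul_le_mul hu1 ((abs_sub _ _).trans (add_le_add ha hb)) (abs_nonneg _) zero_le_one
    calc |-b - u * (a - b)| ≤ |-b| + |u * (a - b)| := abs_sub _ _
      _ ≤ 3 * M := by rw [abs_neg]; linarith
  have e1 : δ * |U₁| ≤ 3 * (κ * r) := by
    rw [← abs_of_pos hδ0, ← abs_mul,
      show δ * U₁ = -b₁ - u * (a₁ - b₁) by linarith]
    exact key _ _ _ ha₁ hb₁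
  have f1 : P * |U₁| ≤ 3 * κ * C₀ * r := by
    calc P * |U₁| ≤ C₀ * δ * |U₁| := by gcongr
      _ = C₀ * (δ * |U₁|) := by ring
      _ ≤ C₀ * (3 * (κ * r)) := by gcongr
      _ = _ := by ring
  have f1' : |U₁| ≤ 3 * κ * C₀ * (r / P) := by
    rw [← mul_div_assoc, le_div_iff₀ hP]; linarith
  refine ⟨f1', ?_⟩
  have e2 : δ * |U₂| ≤ 3 * κ + 2 * |U₁| * (κ * r + κ * r) := by
    rw [← abs_of_pos hδ0, ← abs_mul,
      show δ * U₂ = (-b₂ - u * (a₂ - b₂)) - 2 * U₁ * (a₁ - b₁) by linarith]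
    refine (abs_sub _ _).trans (add_le_add (key _ _ _ ha₂ hb₂) ?_)
    rw [abs_mul, abs_mul, abs_two]
    gcongr
    exact (abs_sub _ _).trans (add_le_add ha₁ hb₁)
  -- `|U₁| r ≲ r² / P ≤ 1`: the quadratic growth of the gap absorbs both factors `|x'|`.
  have e3 : |U₁| * r ≤ 3 * κ * C₀ := by
    calc |U₁| * r ≤ 3 * κ * C₀ * (r / P) * r := by gcongr
      _ = 3 * κ * C₀ * (r ^ 2 / P) := by ring
      _ ≤ 3 * κ * C₀ * 1 := by
        gcongr; exact (div_le_one hP).2 hrP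
      _ = _ := by ring
  rw [le_div_iff₀ hP]
  calc |U₂| * P ≤ |U₂| * (C₀ * δ) := by gcongr
    _ = C₀ * (δ * |U₂|) := by ring
    _ ≤ C₀ * (3 * κ + 2 * |U₁| * (κ * r + κ * r)) := by gcongr
    _ = C₀ * (3 * κ + 4 * κ * (|U₁| * r)) := by ring
    _ ≤ C₀ * (3 * κ + 4 * κ * (3 * κ * C₀)) := by gcongr
    _ = _ := by ring

section Main

variable {n : ℕ} {ε : ℝ} {h1 h2 φ ψ : Ep n → ℝ} {x : Efull n}

lemma contDiffAt_ubar (c1 : ContDiffAt ℝ 2 h1 x.1) (c2 : ContDiffAt ℝ 2 h2 x.1)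
    (hδ : ε + h1 x.1 - h2 x.1 ≠ 0) : ContDiffAt ℝ 2 (ubar n ε h1 h2) x := by
  unfold ubar
  exact (((contDiffAt_snd.sub (contDiffAt_comp_fst c2)).add contDiffAt_const)).div
    ((contDiffAt_const.add (contDiffAt_comp_fst c1)).sub (contDiffAt_comp_fst c2)) hδ

/-- The identity `ūδ = x_n - h₂ + ε/2`, differentiated once and twice in direction `v`. -/
lemma ubar_derivs (c1 : ContDiffAt ℝ 2 h1 x.1) (c2 : ContDiffAt ℝ 2 h2 x.1)
    (hδ : ε + h1 x.1 - h2 x.1 ≠ 0) (v : Efull n) :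
    v.2 - fderiv ℝ h2 x.1 v.1 =
      ubar n ε h1 h2 x * (fderiv ℝ h1 x.1 v.1 - fderiv ℝ h2 x.1 v.1) +
        (ε + h1 x.1 - h2 x.1) * fderiv ℝ (ubar n ε h1 h2) x v ∧
    -dirDeriv2 h2 x.1 v.1 =
      ubar n ε h1 h2 x * (dirDeriv2 h1 x.1 v.1 - dirDeriv2 h2 x.1 v.1) +
        2 * fderiv ℝ (ubar n ε h1 h2) x v * (fderiv ℝ h1 x.1 v.1 - fderiv ℝ h2 x.1 v.1) +
        (ε + h1 x.1 - h2 x.1) * dirDeriv2 (ubar n ε h1 h2) x v := by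
  have C1 := contDiffAt_comp_fst c1
  have C2 := contDiffAt_comp_fst c2
  have cu := contDiffAt_ubar c1 c2 hδ
  have cs : ContDiffAt ℝ 2 (fun y : Efull n => y.2) x := contDiffAt_snd
  have ce1 : ContDiffAt ℝ 2 (fun y : Efull n => ε + h1 y.1) x := contDiffAt_const.add C1
  have cd : ContDiffAt ℝ 2 (fun y : Efull n => ε + h1 y.1 - h2 y.1) x := ce1.sub C2
  have csh : ContDiffAt ℝ 2 (fun y : Efull n => y.2 - h2 y.1) x := cs.sub C2
  have heq : (fun y : Efull n => ubar n ε h1 h2 y * (ε + h1 y.1 - h2 y.1)) =ᶠ[nhds x]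
      fun y => y.2 - h2 y.1 + ε / 2 := by
    filter_upwards [cd.continuousAt.eventually_ne hδ] with y hy
    exact div_mul_cancel₀ _ hy
  have d1 := c1.differentiableAt two_ne_zero
  have d2 := c2.differentiableAt two_ne_zero
  have D1 := C1.differentiableAt two_ne_zero
  have D2 := C2.differentiableAt two_ne_zero
  have hδ1 : fderiv ℝ (fun y : Efull n => ε + h1 y.1 - h2 y.1) x v =
      fderiv ℝ h1 x.1 v.1 - fderiv ℝ h2 x.1 v.1 := by
    rw [fderiv_fun_sub (ce1.differentiableAt two_ne_zero) D2, fderiv_const_add]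
    rw [sub_apply, fderiv_comp_fst_apply d1, fderiv_comp_fst_apply d2]
  have hδ2 : dirDeriv2 (fun y : Efull n => ε + h1 y.1 - h2 y.1) x v =
      dirDeriv2 h1 x.1 v.1 - dirDeriv2 h2 x.1 v.1 := by
    rw [dirDeriv2_sub ce1 C2, dirDeriv2_add contDiffAt_const C1, dirDeriv2_const,
      dirDeriv2_comp_fst c1, dirDeriv2_comp_fst c2, zero_add]
  have hw1 : fderiv ℝ (fun y : Efull n => y.2 - h2 y.1 + ε / 2) x v =
      v.2 - fderiv ℝ h2 x.1 v.1 := by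
    rw [fderiv_add_const, fderiv_fun_sub (cs.differentiableAt two_ne_zero) D2,
      sub_apply, fderiv_comp_fst_apply d2,
      (hasFDerivAt_snd (𝕜 := ℝ) (p := x)).fderiv]
    rfl
  have hw2 : dirDeriv2 (fun y : Efull n => y.2 - h2 y.1 + ε / 2) x v =
      -dirDeriv2 h2 x.1 v.1 := by
    rw [dirDeriv2_add csh contDiffAt_const, dirDeriv2_sub cs C2, dirDeriv2_const, dirDeriv2_snd,
      dirDeriv2_comp_fst c2]
    ring
  constructor
  · rw [← hw1, ← heq.fderiv_eq, fderiv_fun_mul (cu.differentiableAt two_ne_zero)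
      (cd.differentiableAt two_ne_zero), ← hδ1]
    rfl
  · rw [← hw2, ← dirDeriv2_congr heq, dirDeriv2_mul cu cd, hδ1, hδ2]

/-- The Leibniz rule for `ũ = ψ + (φ - ψ)ū`. -/
lemma dirDeriv2_util (c1 : ContDiffAt ℝ 2 h1 x.1) (c2 : ContDiffAt ℝ 2 h2 x.1)
    (cφ : ContDiffAt ℝ 2 φ x.1) (cψ : ContDiffAt ℝ 2 ψ x.1)
    (hδ : ε + h1 x.1 - h2 x.1 ≠ 0) (v : Efull n) :
    dirDeriv2 (util n ε h1 h2 φ ψ) x v =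
      dirDeriv2 ψ x.1 v.1 + (φ x.1 - ψ x.1) * dirDeriv2 (ubar n ε h1 h2) x v +
        2 * (fderiv ℝ φ x.1 v.1 - fderiv ℝ ψ x.1 v.1) * fderiv ℝ (ubar n ε h1 h2) x v +
        ubar n ε h1 h2 x * (dirDeriv2 φ x.1 v.1 - dirDeriv2 ψ x.1 v.1) := by
  have cu := contDiffAt_ubar c1 c2 hδ
  have Cφ := contDiffAt_comp_fst cφ
  have Cψ := contDiffAt_comp_fst cψ
  have cg : ContDiffAt ℝ 2 (fun y : Efull n => φ y.1 - ψ y.1) x := Cφ.sub Cψ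
  have heq : util n ε h1 h2 φ ψ =
      fun y => ψ y.1 + (φ y.1 - ψ y.1) * ubar n ε h1 h2 y := by
    funext y; unfold util; ring
  rw [heq, dirDeriv2_add Cψ (cg.mul cu), dirDeriv2_mul cg cu, dirDeriv2_sub Cφ Cψ,
    dirDeriv2_comp_fst cφ, dirDeriv2_comp_fst cψ, fderiv_fun_sub (Cφ.differentiableAt two_ne_zero)
    (Cψ.differentiableAt two_ne_zero), sub_apply,
    fderiv_comp_fst_apply (cφ.differentiableAt two_ne_zero),
    fderiv_comp_fst_apply (cψ.differentiableAt two_ne_zero)]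
  ring

lemma abs_dirDeriv2_le {f : Ep n → ℝ} {y e : Ep n} (hf : ContDiffAt ℝ 2 f y) (he : ‖e‖ = 1) :
    |dirDeriv2 f y e| ≤ ‖fderiv ℝ (fderiv ℝ f) y‖ := by
  rw [dirDeriv2_eq_hess hf, ← Real.norm_eq_abs]
  simpa [he] using (fderiv ℝ (fderiv ℝ f) y).le_opNorm₂ e e

lemma abs_fderiv_apply_le {f : Ep n → ℝ} {y e : Ep n} (he : ‖e‖ = 1) :
    |fderiv ℝ f y e| ≤ ‖fderiv ℝ f y‖ := by
  simpa [he] using (fderiv ℝ f y).le_opNorm e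

/-- `ũ` is affine in `x_n`. -/
lemma dirDeriv2_util_vert (c1 : ContDiffAt ℝ 2 h1 x.1) (c2 : ContDiffAt ℝ 2 h2 x.1)
    (cφ : ContDiffAt ℝ 2 φ x.1) (cψ : ContDiffAt ℝ 2 ψ x.1)
    (hδ : ε + h1 x.1 - h2 x.1 ≠ 0) :
    dirDeriv2 (util n ε h1 h2 φ ψ) x (0, 1) = 0 := by
  have h := (ubar_derivs c1 c2 hδ (0, 1)).2
  rw [dirDeriv2_util c1 c2 cφ cψ hδ]
  simp only [dirDeriv2_eq_hess c1, dirDeriv2_eq_hess c2, dirDeriv2_eq_hess cφ,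
    dirDeriv2_eq_hess cψ, map_zero, sub_zero, mul_zero, neg_zero, add_zero, zero_add] at h ⊢
  rcases mul_eq_zero.1 h.symm with h | h
  · exact absurd h hδ
  · rw [h]; simp

/-- The bound for a single horizontal second derivative `∂_i²ũ`. -/
lemma abs_dirDeriv2_util_le {κ0 κ1 C₀ : ℝ} (hκ1 : 0 < κ1) (hC₀ : 1 ≤ C₀) (hε : 0 < ε)
    (hg : HGeom n ε κ0 κ1 h1 h2) (hd : DeltaComp n ε C₀ h1 h2)
    (hφ : ContDiffOn ℝ 2 φ (closedBall 0 1)) (hψ : ContDiffOn ℝ 2 ψ (closedBall 0 1))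
    (hx : x ∈ Omega n ε h1 h2 1) {e : Ep n} (he : ‖e‖ = 1) :
    |dirDeriv2 (util n ε h1 h2 φ ψ) x (e, 0)| ≤
      |φ x.1 - ψ x.1| * ((3 * κ1 * C₀ + 12 * κ1 ^ 2 * C₀ ^ 2) / (ε + ‖x.1‖ ^ 2)) +
      2 * (gradSup n φ + gradSup n ψ) * (3 * κ1 * C₀ * (‖x.1‖ / (ε + ‖x.1‖ ^ 2))) +
      2 * (hessSup n φ + hessSup n ψ) := by
  obtain ⟨g1, g2, -, -, -, g1', g2', -, gκ⟩ := hg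
  obtain ⟨hx1, hx2, hx3⟩ := hx
  have hxc : x.1 ∈ closedBall (0 : Ep n) 1 := by simpa using hx1.le
  have k1 : C2norm n h1 ≤ κ1 := by linarith [C2norm_nonneg h2]
  have k2 : C2norm n h2 ≤ κ1 := by linarith [C2norm_nonneg h1]
  have c1 := contDiffAt_of_ball g1 hx1
  have c2 := contDiffAt_of_ball g2 hx1
  have cφ := contDiffAt_of_ball hφ hx1
  have cψ := contDiffAt_of_ball hψ hx1
  have hP : 0 < ε + ‖x.1‖ ^ 2 := by positivity
  have hδ : 0 < ε + h1 x.1 - h2 x.1 := by linarith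
  have hu0 : 0 ≤ ubar n ε h1 h2 x := div_nonneg (by linarith) hδ.le
  have hu1 : ubar n ε h1 h2 x ≤ 1 := (div_le_one hδ).2 (by linarith)
  obtain ⟨I1, I2⟩ := ubar_derivs c1 c2 hδ.ne' (e, 0)
  rw [zero_sub] at I1
  obtain ⟨B1, B2⟩ := abs_ubar_derivs_le hκ1 (by linarith) hP (norm_nonneg x.1)
    (by linarith) (hd x.1 hx1.le).1 hu0 hu1
    ((abs_fderiv_apply_le he).trans (norm_fderiv_le_mul_norm g1 g1' k1 hx1))
    ((abs_fderiv_apply_le he).trans (norm_fderiv_le_mul_norm g2 g2' k2 hx1))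
    ((abs_dirDeriv2_le c1 he).trans ((norm_hess_le_C2norm g1 hxc).trans k1))
    ((abs_dirDeriv2_le c2 he).trans ((norm_hess_le_C2norm g2 hxc).trans k2)) I1 I2
  have Gφ := (abs_fderiv_apply_le (f := φ) (y := x.1) he).trans (norm_fderiv_le_gradSup hφ hxc)
  have Gψ := (abs_fderiv_apply_le (f := ψ) (y := x.1) he).trans (norm_fderiv_le_gradSup hψ hxc)
  have Hφ := (abs_dirDeriv2_le cφ he).trans (norm_hess_le_hessSup hφ hxc)
  have Hψ := (abs_dirDeriv2_le cψ he).trans (norm_hess_le_hessSup hψ hxc)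
  have T2 : |(φ x.1 - ψ x.1) * dirDeriv2 (ubar n ε h1 h2) x (e, 0)| ≤
      |φ x.1 - ψ x.1| * ((3 * κ1 * C₀ + 12 * κ1 ^ 2 * C₀ ^ 2) / (ε + ‖x.1‖ ^ 2)) := by
    rw [abs_mul]; gcongr
  have T3 : |2 * (fderiv ℝ φ x.1 e - fderiv ℝ ψ x.1 e) * fderiv ℝ (ubar n ε h1 h2) x (e, 0)| ≤
      2 * (gradSup n φ + gradSup n ψ) * (3 * κ1 * C₀ * (‖x.1‖ / (ε + ‖x.1‖ ^ 2))) := by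
    rw [abs_mul, abs_mul, abs_two]
    have := gradSup_nonneg φ
    have := gradSup_nonneg ψ
    gcongr
    exact (abs_sub _ _).trans (add_le_add Gφ Gψ)
  have T4 : |ubar n ε h1 h2 x * (dirDeriv2 φ x.1 e - dirDeriv2 ψ x.1 e)| ≤
      1 * (hessSup n φ + hessSup n ψ) := by
    rw [abs_mul, abs_of_nonneg hu0]
    gcongr
    exact (abs_sub _ _).trans (add_le_add Hφ Hψ)
  rw [dirDeriv2_util c1 c2 cφ cψ hδ.ne']
  refine (abs_add_le _ _).trans ?_
  refine (add_le_add_left ((abs_add_le _ _).trans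
    (add_le_add_left (abs_add_le _ _) _)) _).trans ?_
  have := hessSup_nonneg φ
  linarith

end Main

theorem stmt10 (n : ℕ) (hn : 2 ≤ n) (κ1 C₀ : ℝ) (hκ1 : 0 < κ1) (hC₀ : 1 ≤ C₀) :
    ∃ C : ℝ, 0 < C ∧
      ∀ κ0 : ℝ, 0 < κ0 → ∀ ε ∈ Set.Ioo (0:ℝ) 1, ∀ h1 h2 : Ep n → ℝ,
        HGeom n ε κ0 κ1 h1 h2 → DeltaComp n ε C₀ h1 h2 →
        ∀ φ ψ : Ep n → ℝ,
          ContDiffOn ℝ 2 φ (closedBall 0 1) → ContDiffOn ℝ 2 ψ (closedBall 0 1) →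
        ∀ x ∈ Omega n ε h1 h2 1,
          |lapl n (util n ε h1 h2 φ ψ) x| ≤
            C * |φ x.1 - ψ x.1| / (ε + ‖x.1‖^2) +
            C * (‖x.1‖ / (ε + ‖x.1‖^2) + 1) * (gradSup n φ + gradSup n ψ) +
            C * (hessSup n φ + hessSup n ψ) := by
  have hn0 : (0 : ℝ) < n := by exact_mod_cast (by omega : 0 < n)
  have hC₀' : 0 < C₀ := by linarith
  set K : ℝ := 2 + 6 * κ1 * C₀ + (3 * κ1 * C₀ + 12 * κ1 ^ 2 * C₀ ^ 2) with hK
  have hK2 : 2 ≤ K := by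
    have : 0 ≤ 6 * κ1 * C₀ + (3 * κ1 * C₀ + 12 * κ1 ^ 2 * C₀ ^ 2) := by positivity
    linarith
  have hK6 : 6 * κ1 * C₀ ≤ K := by
    have : 0 ≤ 3 * κ1 * C₀ + 12 * κ1 ^ 2 * C₀ ^ 2 := by positivity
    linarith
  have hK15 : 3 * κ1 * C₀ + 12 * κ1 ^ 2 * C₀ ^ 2 ≤ K := by
    have : 0 ≤ 6 * κ1 * C₀ := by positivity
    linarith
  refine ⟨n * K, by positivity, ?_⟩
  intro κ0 _ ε hε h1 h2 hg hd φ ψ hφ hψ x hx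
  have hε0 : 0 < ε := hε.1
  have hP : 0 < ε + ‖x.1‖ ^ 2 := by positivity
  have hδ : 0 < ε + h1 x.1 - h2 x.1 := by linarith [hx.2.1, hx.2.2]
  have hGn : 0 ≤ gradSup n φ + gradSup n ψ := add_nonneg (gradSup_nonneg φ) (gradSup_nonneg ψ)
  have hHn : 0 ≤ hessSup n φ + hessSup n ψ := add_nonneg (hessSup_nonneg φ) (hessSup_nonneg ψ)
  set B : ℝ := K * (|φ x.1 - ψ x.1| / (ε + ‖x.1‖ ^ 2) +
    (‖x.1‖ / (ε + ‖x.1‖ ^ 2) + 1) * (gradSup n φ + gradSup n ψ) +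
    (hessSup n φ + hessSup n ψ)) with hB
  have hB0 : 0 ≤ B := by positivity
  have hdir : ∀ α : Fin n, |dirDeriv2 (util n ε h1 h2 φ ψ) x (dir n α)| ≤ B := by
    intro α
    unfold dir
    split_ifs with hα
    · refine (abs_dirDeriv2_util_le hκ1 hC₀ hε0 hg hd hφ hψ hx (by simp)).trans ?_
      have t1 : |φ x.1 - ψ x.1| *
          ((3 * κ1 * C₀ + 12 * κ1 ^ 2 * C₀ ^ 2) / (ε + ‖x.1‖ ^ 2)) ≤
          K * (|φ x.1 - ψ x.1| / (ε + ‖x.1‖ ^ 2)) := by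
        rw [mul_div_left_comm]
        gcongr
      have t2 : 2 * (gradSup n φ + gradSup n ψ) * (3 * κ1 * C₀ * (‖x.1‖ / (ε + ‖x.1‖ ^ 2))) ≤
          K * ((‖x.1‖ / (ε + ‖x.1‖ ^ 2) + 1) * (gradSup n φ + gradSup n ψ)) := by
        calc _ = 6 * κ1 * C₀ * (‖x.1‖ / (ε + ‖x.1‖ ^ 2) * (gradSup n φ + gradSup n ψ)) := by ring
          _ ≤ _ := by
            gcongr
            linarith
      have t3 : 2 * (hessSup n φ + hessSup n ψ) ≤ K * (hessSup n φ + hessSup n ψ) := by gcongr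
      rw [hB]
      linarith
    · rw [dirDeriv2_util_vert (contDiffAt_of_ball hg.1 hx.1) (contDiffAt_of_ball hg.2.1 hx.1)
        (contDiffAt_of_ball hφ hx.1) (contDiffAt_of_ball hψ hx.1) hδ.ne', abs_zero]
      exact hB0
  calc |lapl n (util n ε h1 h2 φ ψ) x|
      = |∑ α : Fin n, dirDeriv2 (util n ε h1 h2 φ ψ) x (dir n α)| := rfl
    _ ≤ ∑ α : Fin n, |dirDeriv2 (util n ε h1 h2 φ ψ) x (dir n α)| :=
      Finset.abs_sum_le_sum_abs _ _
    _ ≤ ∑ _α : Fin n, B := Finset.sum_le_sum fun α _ => hdir α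
    _ = n * B := by simp
    _ = _ := by rw [hB]; ring
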